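/- Let (X, f_{1,∞}) be a periodic non-autonomous system on a compact Hausdorff uniform space whose induced autonomous map g has a transitive point. Then (X, f_{1,∞}) is either equicontinuous or eventually sensitive. -/

import Mathlib

open Topology Filter Set
open scoped Uniformity

/-- `traj f n = f_n ∘ ⋯ ∘ f_1` (and `traj f 0 = id`), i.e. `f_1^n`. -/
def traj {X : Type*} (f : ℕ → X → X) : ℕ → X → X
  | 0 => id
  | n + 1 => f (n + 1) ∘ traj f n

/-- The family `f` is periodic with period `p`. -/
def PeriodicFam {X : Type*} (f : ℕ → X → X) (p : ℕ) : Prop :=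
  ∀ n, f (n + p) = f n

/-- A set of naturals is thick: it contains arbitrarily long blocks of consecutive integers. -/
def Thick (T : Set ℕ) : Prop :=
  ∀ k : ℕ, ∃ n : ℕ, ∀ i ≤ k, n + i ∈ T

/-- A set of naturals is syndetic: it has bounded gaps. -/
def Syndetic (S : Set ℕ) : Prop :=
  ∃ M : ℕ, ∀ n : ℕ, ∃ m ∈ S, n ≤ m ∧ m ≤ n + M

/-- `x` is a transitive point of the non-autonomous system `(X, f_{1,∞})`. -/
def TransPt {X : Type*} [TopologicalSpace X] (f : ℕ → X → X) (x : X) : Prop :=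
  Dense (Set.range fun n => traj f n x)

/-- `x` is a transitive point of the autonomous system `(X, g)`. -/
def TransPtAut {X : Type*} [TopologicalSpace X] (g : X → X) (x : X) : Prop :=
  Dense (Set.range fun n => g^[n] x)

/-- `x` is an equicontinuity point of `(X, f_{1,∞})` on a uniform space. -/
def EqPt {X : Type*} [UniformSpace X] (f : ℕ → X → X) (x : X) : Prop :=
  ∀ E ∈ 𝓤 X, ∃ D ∈ 𝓤 X, ∀ y : X, (x, y) ∈ D → ∀ n : ℕ, (traj f n x, traj f n y) ∈ E

/-- `x` is a syndetically equicontinuous point of `(X, f_{1,∞})`. -/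
def SynEqPt {X : Type*} [UniformSpace X] (f : ℕ → X → X) (x : X) : Prop :=
  ∀ E ∈ 𝓤 X, ∃ U ∈ 𝓝 x,
    Syndetic {n : ℕ | ∀ x₁ ∈ U, ∀ x₂ ∈ U, (traj f n x₁, traj f n x₂) ∈ E}

/-- `x` is a syndetically equicontinuous point of the autonomous system `(X, g)`. -/
def SynEqPtAut {X : Type*} [UniformSpace X] (g : X → X) (x : X) : Prop :=
  ∀ E ∈ 𝓤 X, ∃ U ∈ 𝓝 x,
    Syndetic {n : ℕ | ∀ x₁ ∈ U, ∀ x₂ ∈ U, (g^[n] x₁, g^[n] x₂) ∈ E}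

/-- `N(U, D)` for the non-autonomous system. -/
def NSet {X : Type*} (f : ℕ → X → X) (U : Set X) (D : Set (X × X)) : Set ℕ :=
  {n : ℕ | 0 < n ∧ ∃ x ∈ U, ∃ y ∈ U, (traj f n x, traj f n y) ∉ D}

/-- `N(U, D)` for the autonomous system. -/
def NSetAut {X : Type*} (g : X → X) (U : Set X) (D : Set (X × X)) : Set ℕ :=
  {n : ℕ | 0 < n ∧ ∃ x ∈ U, ∃ y ∈ U, (g^[n] x, g^[n] y) ∉ D}

/-- Sensitivity of `(X, f_{1,∞})`. -/
def Sensitive {X : Type*} [UniformSpace X] (f : ℕ → X → X) : Prop :=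
  ∃ D ∈ 𝓤 X, ∀ U : Set X, IsOpen U → U.Nonempty → (NSet f U D).Nonempty

/-- Thick sensitivity of `(X, f_{1,∞})`. -/
def ThickSensitive {X : Type*} [UniformSpace X] (f : ℕ → X → X) : Prop :=
  ∃ D ∈ 𝓤 X, ∀ U : Set X, IsOpen U → U.Nonempty → Thick (NSet f U D)

/-- Thick sensitivity of the autonomous system `(X, g)`. -/
def ThickSensitiveAut {X : Type*} [UniformSpace X] (g : X → X) : Prop :=
  ∃ D ∈ 𝓤 X, ∀ U : Set X, IsOpen U → U.Nonempty → Thick (NSetAut g U D)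

/-- Multi-sensitivity of `(X, f_{1,∞})`. -/
def MultiSensitive {X : Type*} [UniformSpace X] (f : ℕ → X → X) : Prop :=
  ∃ D ∈ 𝓤 X, ∀ (k : ℕ) (U : Fin (k + 1) → Set X),
    (∀ i, IsOpen (U i)) → (∀ i, (U i).Nonempty) → (⋂ i, NSet f (U i) D).Nonempty

/-- Multi-sensitivity of the autonomous system `(X, g)`. -/
def MultiSensitiveAut {X : Type*} [UniformSpace X] (g : X → X) : Prop :=
  ∃ D ∈ 𝓤 X, ∀ (k : ℕ) (U : Fin (k + 1) → Set X),
    (∀ i, IsOpen (U i)) → (∀ i, (U i).Nonempty) → (⋂ i, NSetAut g (U i) D).Nonempty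

/-- Eventual sensitivity of `(X, f_{1,∞})` with a given entourage `D`. -/
def EvSensitiveWith {X : Type*} [UniformSpace X] (f : ℕ → X → X) (D : Set (X × X)) : Prop :=
  ∀ x : X, ∀ E ∈ 𝓤 X, ∃ n k : ℕ, 0 < n ∧ 0 < k ∧
    ∃ y : X, (traj f n x, y) ∈ E ∧ (traj f (n + k) x, traj f k y) ∉ D

/-- Eventual sensitivity of `(X, f_{1,∞})`. -/
def EvSensitive {X : Type*} [UniformSpace X] (f : ℕ → X → X) : Prop :=
  ∃ D ∈ 𝓤 X, EvSensitiveWith f D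

/-- Eventual sensitivity of the autonomous system `(X, g)` with entourage `D`. -/
def EvSensitiveAutWith {X : Type*} [UniformSpace X] (g : X → X) (D : Set (X × X)) : Prop :=
  ∀ x : X, ∀ E ∈ 𝓤 X, ∃ q k : ℕ, 0 < q ∧ 0 < k ∧
    ∃ y : X, (g^[q] x, y) ∈ E ∧ (g^[q + k] x, g^[k] y) ∉ D

/-- `(x, y)` is a (topological) equicontinuity pair for `(X, f_{1,∞})`. -/
def EqPair {X : Type*} [TopologicalSpace X] (f : ℕ → X → X) (x y : X) : Prop :=
  ∀ O ∈ 𝓝 y, ∃ U ∈ 𝓝 x, ∃ V ∈ 𝓝 y, ∀ n : ℕ, 0 < n →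
    ((traj f n '' U) ∩ V).Nonempty → traj f n '' U ⊆ O

/-- `(x, y)` is a syndetic equicontinuity pair for `(X, f_{1,∞})`. -/
def SynEqPair {X : Type*} [TopologicalSpace X] (f : ℕ → X → X) (x y : X) : Prop :=
  ∀ O ∈ 𝓝 y, ∃ U ∈ 𝓝 x, ∃ V ∈ 𝓝 y,
    Syndetic {n : ℕ | ((traj f n '' U) ∩ V).Nonempty → traj f n '' U ⊆ O}

/-- `O` is a splitting neighborhood of `y` with respect to `x`. -/
def SplittingNbhd {X : Type*} [TopologicalSpace X] (f : ℕ → X → X) (x y : X) (O : Set X) :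
    Prop :=
  O ∈ 𝓝 y ∧ ∀ U ∈ 𝓝 x, ∀ V ∈ 𝓝 y, ∃ n : ℕ, 0 < n ∧
    ((traj f n '' U) ∩ V).Nonempty ∧ ¬ traj f n '' U ⊆ O

/-- A finite open cover of `X`. -/
def IsFinOpenCover {X : Type*} [TopologicalSpace X] (𝒰 : Finset (Set X)) : Prop :=
  (∀ U ∈ 𝒰, IsOpen U) ∧ ⋃₀ (↑𝒰 : Set (Set X)) = Set.univ

/-- `N(V, 𝒰)`: times at which `f_1^n(V)` is not contained in any single member of `𝒰`. -/
def HNSet {X : Type*} (f : ℕ → X → X) (V : Set X) (𝒰 : Finset (Set X)) : Set ℕ :=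
  {n : ℕ | 0 < n ∧ ∀ U ∈ 𝒰, ¬ traj f n '' V ⊆ U}

/-- `N(V, 𝒰)` for the autonomous system. -/
def HNSetAut {X : Type*} (g : X → X) (V : Set X) (𝒰 : Finset (Set X)) : Set ℕ :=
  {n : ℕ | 0 < n ∧ ∀ U ∈ 𝒰, ¬ g^[n] '' V ⊆ U}

/-- Hausdorff sensitivity of `(X, f_{1,∞})`. -/
def HSensitive {X : Type*} [TopologicalSpace X] (f : ℕ → X → X) : Prop :=
  ∃ 𝒰 : Finset (Set X), IsFinOpenCover 𝒰 ∧
    ∀ V : Set X, IsOpen V → V.Nonempty → (HNSet f V 𝒰).Nonempty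

/-- Hausdorff sensitivity of the autonomous system `(X, g)`. -/
def HSensitiveAut {X : Type*} [TopologicalSpace X] (g : X → X) : Prop :=
  ∃ 𝒰 : Finset (Set X), IsFinOpenCover 𝒰 ∧
    ∀ V : Set X, IsOpen V → V.Nonempty → (HNSetAut g V 𝒰).Nonempty

/-- Thick Hausdorff sensitivity of `(X, f_{1,∞})`. -/
def ThickHSensitive {X : Type*} [TopologicalSpace X] (f : ℕ → X → X) : Prop :=
  ∃ 𝒰 : Finset (Set X), IsFinOpenCover 𝒰 ∧
    ∀ V : Set X, IsOpen V → V.Nonempty → Thick (HNSet f V 𝒰)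

/-- Thick Hausdorff sensitivity of the autonomous system `(X, g)`. -/
def ThickHSensitiveAut {X : Type*} [TopologicalSpace X] (g : X → X) : Prop :=
  ∃ 𝒰 : Finset (Set X), IsFinOpenCover 𝒰 ∧
    ∀ V : Set X, IsOpen V → V.Nonempty → Thick (HNSetAut g V 𝒰)

/-- Multi-Hausdorff sensitivity of the autonomous system `(X, g)`. -/
def MultiHSensitiveAut {X : Type*} [TopologicalSpace X] (g : X → X) : Prop :=
  ∃ 𝒰 : Finset (Set X), IsFinOpenCover 𝒰 ∧
    ∀ (m : ℕ) (V : Fin (m + 1) → Set X),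
      (∀ i, IsOpen (V i)) → (∀ i, (V i).Nonempty) → (⋂ i, HNSetAut g (V i) 𝒰).Nonempty

theorem noncluster_aux {X : Type*} [TopologicalSpace X] [T2Space X] (g : X → X) (x0 : X)
    (h0 : TransPtAut g x0) (z : X) (hz : ¬ MapClusterPt z atTop (fun n => g^[n] x0)) :
    (∃ i, g^[i] x0 = z) ∧ {z} ∈ 𝓝 z := by
  rw [mapClusterPt_iff_frequently] at hz
  push Not at hz
  obtain ⟨U, hU, hN⟩ := hz
  obtain ⟨V, hVU, hVo, hzV⟩ := mem_nhds_iff.1 hU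
  obtain ⟨N, hN⟩ := eventually_atTop.1 hN
  have hfin : ((fun n => g^[n] x0) '' Set.Iio N).Finite := (Set.finite_Iio N).image _
  have hsub : V ⊆ (fun n => g^[n] x0) '' Set.Iio N := by
    refine (h0.open_subset_closure_inter hVo).trans ?_
    refine closure_minimal ?_ hfin.isClosed
    rintro _ ⟨hv, ⟨n, rfl⟩⟩
    refine ⟨n, ?_, rfl⟩
    by_contra hn
    exact hN n (not_lt.1 hn) (hVU hv)
  constructor
  · obtain ⟨i, -, hi⟩ := hsub hzV
    exact ⟨i, hi⟩
  · have hc : IsClosed (((fun n => g^[n] x0) '' Set.Iio N) \ {z}) :=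
      (hfin.subset Set.sdiff_subset).isClosed
    have h1 : (((fun n => g^[n] x0) '' Set.Iio N) \ {z})ᶜ ∈ 𝓝 z :=
      hc.isOpen_compl.mem_nhds (by simp)
    filter_upwards [h1, hVo.mem_nhds hzV] with y hy hyV
    by_contra hne
    exact hy ⟨hsub hyV, hne⟩

theorem aut_aux {X : Type*} [UniformSpace X] [CompactSpace X] [T2Space X]
    (g : X → X) (hg : Continuous g) (x0 : X) (h0 : TransPtAut g x0)
    (hns : ∀ D ∈ 𝓤 X, ∃ x, ∃ E ∈ 𝓤 X, IsOpen E ∧ ∀ n k y, (g^[n] x, y) ∈ E →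
      (g^[k] (g^[n] x), g^[k] y) ∈ D) (w : X) (D : Set (X × X)) (hD : D ∈ 𝓤 X) :
    ∀ᶠ y in 𝓝 w, ∀ k, (g^[k] w, g^[k] y) ∈ D := by
  by_cases hw : MapClusterPt w atTop (fun n => g^[n] x0)
  swap
  · filter_upwards [(noncluster_aux g x0 h0 w hw).2] with y hy k
    rw [Set.mem_singleton_iff.1 hy]
    exact refl_mem_uniformity hD
  have hgk : ∀ k, Continuous (g^[k]) := fun k => hg.iterate k
  obtain ⟨D1, hD1, hs1, hc1⟩ := comp_symm_mem_uniformity_sets hD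
  obtain ⟨x, E, hE, hEo, hst⟩ := hns D1 hD1
  suffices hsuff : ∃ n j, (g^[n] x, g^[j] w) ∈ E by
    obtain ⟨n, j, hnj⟩ := hsuff
    have h1 : ∀ᶠ y in 𝓝 w, (g^[n] x, g^[j] y) ∈ E := by
      have : Continuous fun y => (g^[n] x, g^[j] y) := by fun_prop
      exact this.continuousAt.eventually (hEo.mem_nhds hnj)
    have h2 : ∀ᶠ y in 𝓝 w, ∀ k ∈ Set.Iio j, (g^[k] w, g^[k] y) ∈ D := by
      rw [Filter.eventually_all_finite (Set.finite_Iio j)]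
      intro k _
      exact (hgk k).continuousAt.eventually (mem_nhds_left (g^[k] w) hD)
    filter_upwards [h1, h2] with y hy1 hy2 k
    rcases lt_or_ge k j with hk | hk
    · exact hy2 k hk
    · obtain ⟨l, rfl⟩ := Nat.exists_eq_add_of_le' hk
      rw [Function.iterate_add_apply, Function.iterate_add_apply]
      exact hc1 ⟨g^[l] (g^[n] x), hs1.symm _ _ (hst n l _ hnj), hst n l _ hy1⟩
  by_cases hcl : ∃ n, MapClusterPt (g^[n] x) atTop (fun n => g^[n] x0)
  swap
  · push Not at hcl
    obtain ⟨i, hi⟩ := (noncluster_aux g x0 h0 x (hcl 0)).1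
    have hfr := (mapClusterPt_iff_frequently.1 hw) _ (mem_nhds_right w hE)
    obtain ⟨n, hn, hin⟩ := (hfr.and_eventually (eventually_ge_atTop i)).exists
    obtain ⟨l, rfl⟩ := Nat.exists_eq_add_of_le' hin
    refine ⟨l, 0, ?_⟩
    rw [← hi, ← Function.iterate_add_apply]
    exact hn
  obtain ⟨n, hn⟩ := hcl
  obtain ⟨t, ht, hts, htE⟩ := comp_comp_symm_mem_uniformity_sets hE
  obtain ⟨D2, ⟨hD2, hD2c⟩, hD2t⟩ := uniformity_hasBasis_closed.mem_iff.1 ht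
  obtain ⟨x', E', hE', hEo', hst'⟩ := hns D2 hD2
  have hhit : ∀ z, ∃ m, (z, g^[m] x0) ∈ E' := by
    intro z
    obtain ⟨_, ⟨m, rfl⟩, hy⟩ := h0.inter_nhds_nonempty (mem_nhds_left z hE')
    exact ⟨m, hy⟩
  obtain ⟨m, hm⟩ := hhit x'
  obtain ⟨F, hF, hFw⟩ := mapClusterPt_iff_ultrafilter.1 hw
  obtain ⟨w', -, hw'⟩ := isCompact_univ.ultrafilter_le_nhds
    (F.map (fun n => g^[n - m] x')) (by simp)
  have hw' : Tendsto (fun n => g^[n - m] x') F (𝓝 w') := hw'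
  have hge : ∀ᶠ n in (F : Filter ℕ), m ≤ n := hF (eventually_ge_atTop m)
  have hA : ∀ j, (g^[j] w', g^[j] w) ∈ D2 := by
    intro j
    refine hD2c.mem_of_tendsto ((((hgk j).tendsto _).comp hw').prodMk_nhds
      (((hgk j).tendsto _).comp hFw)) ?_
    filter_upwards [hge] with l hl
    obtain ⟨l, rfl⟩ := Nat.exists_eq_add_of_le' hl
    have := hst' 0 (j + l) _ hm
    simpa [Function.iterate_add_apply] using this
  have hB : ∀ y, (w', y) ∈ E' → ∀ k, (g^[k] w', g^[k] y) ∈ D2 := by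
    intro y hy k
    refine hD2c.mem_of_tendsto ((((hgk k).tendsto _).comp hw').prodMk_nhds
      tendsto_const_nhds) ?_
    have : ∀ᶠ l in (F : Filter ℕ), (g^[l - m] x', y) ∈ E' :=
      (hw'.prodMk_nhds tendsto_const_nhds).eventually (hEo'.mem_nhds hy)
    filter_upwards [this] with l hl
    exact hst' _ k _ hl
  obtain ⟨m2, hm2⟩ := hhit w'
  have hfr := (mapClusterPt_iff_frequently.1 hn) _ (mem_nhds_left _ ht)
  obtain ⟨n3, hn3, hle⟩ := (hfr.and_eventually (eventually_ge_atTop m2)).exists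
  obtain ⟨j, rfl⟩ := Nat.exists_eq_add_of_le' hle
  have h3 := hB _ hm2 j
  rw [← Function.iterate_add_apply] at h3
  refine ⟨n, j, htE ?_⟩
  exact ⟨g^[j] w', ⟨g^[j + m2] x0, hn3, hts.symm _ _ (hD2t h3)⟩, hD2t (hA j)⟩

theorem traj_cont_aux {X : Type*} [TopologicalSpace X] (f : ℕ → X → X)
    (hf : ∀ n, Continuous (f n)) (n : ℕ) : Continuous (traj f n) := by
  induction n with
  | zero => exact continuous_id
  | succ n ih => exact (hf _).comp ih

theorem traj_add_aux {X : Type*} (f : ℕ → X → X) (p : ℕ) (hper : PeriodicFam f p)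
    (q r : ℕ) (x : X) : traj f (r + p * q) x = traj f r (traj f (p * q) x) := by
  have hq : ∀ q n, f (n + p * q) = f n := by
    intro q
    induction q with
    | zero => simp
    | succ q ih => intro n; rw [Nat.mul_succ, ← add_assoc, hper, ih]
  induction r with
  | zero => simp [traj]
  | succ r ih =>
    have : r + 1 + p * q = (r + p * q) + 1 := by ring
    rw [this]
    simp only [traj, Function.comp_apply, ih]
    rw [← hq q (r + 1)]
    congr 1
    ring_nf

theorem traj_mul_aux {X : Type*} (f : ℕ → X → X) (p : ℕ) (hper : PeriodicFam f p)
    (q : ℕ) (x : X) : traj f (p * q) x = (traj f p)^[q] x := by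
  induction q with
  | zero => simp [traj]
  | succ q ih =>
    rw [Nat.mul_succ, add_comm, traj_add_aux f p hper, ih, Function.iterate_succ_apply']

theorem equicontinuous_or_eventuallySensitive {X : Type*} [UniformSpace X] [CompactSpace X]
    [T2Space X]
    (f : ℕ → X → X) (hf : ∀ n, Continuous (f n))
    (p : ℕ) (hp : 0 < p) (hper : PeriodicFam f p)
    (htrans : ∃ x, TransPtAut (traj f p) x) :
    (∀ x : X, EqPt f x) ∨ EvSensitive f := by
  rw [or_iff_not_imp_right]
  intro hns
  obtain ⟨x0, h0⟩ := htrans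
  have hgc : Continuous (traj f p) := traj_cont_aux f hf p
  have hns' : ∀ D ∈ 𝓤 X, ∃ x, ∃ E ∈ 𝓤 X, IsOpen E ∧ ∀ n k y, ((traj f p)^[n] x, y) ∈ E →
      ((traj f p)^[k] ((traj f p)^[n] x), (traj f p)^[k] y) ∈ D := by
    intro D hD
    unfold EvSensitive EvSensitiveWith at hns
    push Not at hns
    obtain ⟨x, E, hE, h⟩ := hns D hD
    obtain ⟨E1, ⟨hE1, hE1o⟩, hE1s⟩ :=
      uniformity_hasBasis_open.mem_iff.1 (inter_mem hE hD)
    refine ⟨traj f p x, E1, hE1, hE1o, ?_⟩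
    intro n k y hy
    rw [← Function.iterate_succ_apply] at hy ⊢
    rcases Nat.eq_zero_or_pos k with rfl | hk
    · exact (hE1s hy).2
    · have := h (p * (n + 1)) (p * k) (by positivity) (by positivity) y
        (by rw [traj_mul_aux f p hper]; exact (hE1s hy).1)
      rw [← mul_add, traj_mul_aux f p hper, traj_mul_aux f p hper, add_comm,
        Function.iterate_add_apply] at this
      exact this
  intro x E hE
  have hE2 : ∃ D ∈ 𝓤 X, ∀ r < p, ∀ a b, (a, b) ∈ D → (traj f r a, traj f r b) ∈ E := by
    refine ⟨⋂ r ∈ Set.Iio p, {q : X × X | (traj f r q.1, traj f r q.2) ∈ E}, ?_, ?_⟩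
    · rw [Filter.biInter_mem (Set.finite_Iio p)]
      intro r _
      exact (CompactSpace.uniformContinuous_of_continuous (traj_cont_aux f hf r)) hE
    · intro r hr a b hab
      exact Set.mem_iInter₂.1 hab r hr
  obtain ⟨D, hD, hDE⟩ := hE2
  have hev := aut_aux (traj f p) hgc x0 h0 hns' x D hD
  obtain ⟨D', hD', hD's⟩ := UniformSpace.mem_nhds_iff.1 hev
  refine ⟨D', hD', fun y hy n => ?_⟩
  have hy2 := hD's hy (n / p)
  have := hDE (n % p) (Nat.mod_lt n hp) _ _ hy2
  rw [← traj_mul_aux f p hper, ← traj_mul_aux f p hper, ← traj_add_aux f p hper,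
    ← traj_add_aux f p hper, Nat.mod_add_div] at this
  exact this
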